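/- arXiv:1302.1336 — 2 statements merged into one kernel-verified Lean document; each statement's English description precedes it below -/
import Mathlib

section
/- Proposition 1 (real states and measurements): let P be an n-partite probability distribution with a quantum representation given by an n-partite quantum state ρ on (Π s, ι s) and projections M^s_{a|x}. Then P also has a quantum representation by a state ρ̂ on the doubled spaces (Π s, Fin 2 × ι s) together with projections M̂^s_{a|x} on Fin 2 × ι s, such that ρ̂ and all M̂^s_{a|x} have real entries and are symmetric (equal to their own transpose), P(a₁,…,a_n|x₁,…,x_n) = tr[ρ̂·(⊗_s M̂^s_{a_s|x_s})] for all outcomes and settings, and for every subset m ⊆ Fin n the negativity is preserved: N_m(ρ̂) = N_m(ρ), where on the doubled space the partial transpose T_m exchanges the full (Fin 2 × ι s) coordinates for s ∈ m. -/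
open Matrix
open scoped Kronecker ComplexOrder

/-- Partial transpose on the first tensor factor. -/
def ptA {ιA ιB : Type*} (ρ : Matrix (ιA × ιB) (ιA × ιB) ℂ) : Matrix (ιA × ιB) (ιA × ιB) ℂ :=
  fun p q => ρ (q.1, p.2) (p.1, q.2)

/-- Sum of the absolute values of the negative eigenvalues of a Hermitian matrix
(0 if the matrix is not Hermitian). -/
noncomputable def negEig {ι : Type*} [Fintype ι] [DecidableEq ι] (M : Matrix ι ι ℂ) : ℝ :=
  letI := Classical.dec M.IsHermitian
  if h : M.IsHermitian then ∑ i, max 0 (-(h.eigenvalues i)) else 0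
/-- The 2×2 matrix Y = [[0,1],[-1,0]] (viewed as a complex matrix). -/
noncomputable def Ymat : Matrix (Fin 2) (Fin 2) ℂ := !![0, 1; -1, 0]

/-- The complex 2×2 matrix 1 - iY = [[1,-i],[i,1]]. -/
noncomputable def oneMinusIY : Matrix (Fin 2) (Fin 2) ℂ := !![1, -Complex.I; Complex.I, 1]

/-- Real embedding of an observable: Â = 1 ⊗ A_r + Y ⊗ A_i, as a block matrix
[[A_r, A_i], [-A_i, A_r]] on Fin 2 × ι. -/
noncomputable def obsEmbed {ι : Type*} (A : Matrix ι ι ℂ) :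
    Matrix (Fin 2 × ι) (Fin 2 × ι) ℂ :=
  fun p q => (1 : Matrix (Fin 2) (Fin 2) ℂ) p.1 q.1 * ((A p.2 q.2).re : ℂ)
    + Ymat p.1 q.1 * ((A p.2 q.2).im : ℂ)

/-- Real embedding of an n-partite state: the entry at row (a,i), column (b,j) is
2^(-n) · Re[(∏ s, (1-iY)(a s, b s)) · ρ(i,j)]. -/
noncomputable def stateEmbed {n : ℕ} {ι : Fin n → Type*}
    (ρ : Matrix ((s : Fin n) → ι s) ((s : Fin n) → ι s) ℂ) :
    Matrix ((s : Fin n) → Fin 2 × ι s) ((s : Fin n) → Fin 2 × ι s) ℂ :=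
  fun r c =>
    ((((2 : ℝ) ^ n)⁻¹ *
      ((∏ s, oneMinusIY (r s).1 (c s).1) * ρ (fun s => (r s).2) (fun s => (c s).2)).re : ℝ) : ℂ)

/-- Tensor product of one matrix per party. -/
def npTensor {n : ℕ} {ι : Fin n → Type*} (M : (s : Fin n) → Matrix (ι s) (ι s) ℂ) :
    Matrix ((s : Fin n) → ι s) ((s : Fin n) → ι s) ℂ :=
  fun i j => ∏ s, M s (i s) (j s)

/-- Partial transpose across the bipartition m : exchanges row and column index
at every coordinate s ∈ m. -/
def ptm {n : ℕ} {ι : Fin n → Type*} [DecidableEq (Fin n)] (m : Finset (Fin n))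
    (ρ : Matrix ((s : Fin n) → ι s) ((s : Fin n) → ι s) ℂ) :
    Matrix ((s : Fin n) → ι s) ((s : Fin n) → ι s) ℂ :=
  fun i j => ρ (fun s => if s ∈ m then j s else i s) (fun s => if s ∈ m then i s else j s)

/-- The vector (1, i), or its conjugate. -/
noncomputable def wv (b : Prop) [Decidable b] (a : Fin 2) : ℂ :=
  if a = 0 then 1 else if b then -Complex.I else Complex.I

/-- Scaled isometry embedding the original space. -/
noncomputable def isoV {n : ℕ} {ι : Fin n → Type*} [∀ s, DecidableEq (ι s)]
    (m : Finset (Fin n)) : Matrix ((s : Fin n) → Fin 2 × ι s) ((s : Fin n) → ι s) ℂ :=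
  fun r i => (((Real.sqrt (2 ^ n))⁻¹ : ℝ) : ℂ) *
    ∏ s, (wv (s ∈ m) (r s).1 * (if (r s).2 = i s then 1 else 0))

lemma scale_sq (n : ℕ) : (((Real.sqrt (2 ^ n))⁻¹ : ℝ) : ℂ) * (((Real.sqrt (2 ^ n))⁻¹ : ℝ) : ℂ)
    = ((2 : ℂ) ^ n)⁻¹ := by
  rw [← Complex.ofReal_mul, ← mul_inv, Real.mul_self_sqrt (by positivity)]
  push_cast; rfl

lemma isoV_apply {n : ℕ} {ι : Fin n → Type*} [∀ s, DecidableEq (ι s)]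
    (m : Finset (Fin n)) (r : (s : Fin n) → Fin 2 × ι s) (i : (s : Fin n) → ι s) :
    isoV m r i = if (fun s => (r s).2) = i then
      (((Real.sqrt (2 ^ n))⁻¹ : ℝ) : ℂ) * ∏ s, wv (s ∈ m) (r s).1 else 0 := by
  unfold isoV
  split_ifs with h
  · subst h; simp
  · obtain ⟨s, hs⟩ := Function.ne_iff.mp h
    rw [Finset.prod_eq_zero (Finset.mem_univ s), mul_zero]
    simp [hs]

lemma star_wv_mul (b : Prop) [Decidable b] : ∑ a, star (wv b a) * wv b a = 2 := by
  by_cases h : b <;> simp [Fin.sum_univ_two, wv, h] <;> norm_num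

lemma wv_mul (b : Prop) [Decidable b] : ∑ a, wv b a * wv b a = 0 := by
  by_cases h : b <;> simp [Fin.sum_univ_two, wv, h]

lemma isoV_iso {n : ℕ} {ι : Fin n → Type*} [∀ s, Fintype (ι s)] [∀ s, DecidableEq (ι s)]
    (m : Finset (Fin n)) : (isoV (ι := ι) m)ᴴ * isoV (ι := ι) m = 1 := by
  ext i j
  have key : ∀ s, ∑ x : Fin 2 × ι s, (star (wv (s ∈ m) x.1) * (if x.2 = i s then 1 else 0)) *
      (wv (s ∈ m) x.1 * (if x.2 = j s then 1 else 0)) = 2 * (if i s = j s then 1 else 0) := by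
    intro s
    rw [← star_wv_mul (s ∈ m), Fintype.sum_prod_type, Finset.sum_mul]
    refine Finset.sum_congr rfl fun a _ => ?_
    rw [Finset.sum_eq_single (i s)]
    · simp; 
    · intro b _ hb; simp [hb]
    · simp
  have h2 := Finset.prod_congr (rfl : (Finset.univ : Finset (Fin n)) = Finset.univ)
    (fun s _ => key s)
  rw [Fintype.prod_sum] at h2
  rw [Matrix.mul_apply]
  have : ∀ r : (s : Fin n) → Fin 2 × ι s, (isoV (ι := ι) m)ᴴ i r * isoV (ι := ι) m r j =
      ((2 : ℂ) ^ n)⁻¹ * ∏ s, (star (wv (s ∈ m) (r s).1) * (if (r s).2 = i s then 1 else 0)) *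
      (wv (s ∈ m) (r s).1 * (if (r s).2 = j s then 1 else 0)) := by
    intro r
    rw [← scale_sq, Finset.prod_mul_distrib, Matrix.conjTranspose_apply]
    unfold isoV
    simp only [star_mul', star_prod, Complex.star_def, Complex.conj_ofReal, apply_ite (starRingEnd ℂ), map_one, map_zero, map_prod]
    ring
  simp only [this]
  rw [← Finset.mul_sum, h2, Finset.prod_mul_distrib]
  simp only [Finset.prod_const, Finset.card_univ, Fintype.card_fin]
  rw [inv_mul_cancel_left₀ (by positivity), Matrix.one_apply]
  split_ifs with h
  · subst h; simp
  · obtain ⟨s, hs⟩ := Function.ne_iff.mp h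
    exact Finset.prod_eq_zero (Finset.mem_univ s) (by simp [hs])

lemma isoV_orth {n : ℕ} {ι : Fin n → Type*} [∀ s, Fintype (ι s)] [∀ s, DecidableEq (ι s)]
    (hn : 0 < n) (m : Finset (Fin n)) : (isoV (ι := ι) m)ᵀ * isoV (ι := ι) m = 0 := by
  ext i j
  have key : ∀ s, ∑ x : Fin 2 × ι s, ((wv (s ∈ m) x.1) * (if x.2 = i s then 1 else 0)) *
      (wv (s ∈ m) x.1 * (if x.2 = j s then 1 else 0)) = 0 := by
    intro s
    rw [Fintype.sum_prod_type]
    trans (∑ a, wv (s ∈ m) a * wv (s ∈ m) a) * (if i s = j s then 1 else 0)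
    · rw [Finset.sum_mul]
      refine Finset.sum_congr rfl fun a _ => ?_
      rw [Finset.sum_eq_single (i s)]
      · simp
      · intro b _ hb; simp [hb]
      · simp
    · rw [wv_mul, zero_mul]
  have h2 := Finset.prod_congr (rfl : (Finset.univ : Finset (Fin n)) = Finset.univ)
    (fun s _ => key s)
  rw [Fintype.prod_sum, Finset.prod_eq_zero (Finset.mem_univ ⟨0, hn⟩) rfl] at h2
  rw [Matrix.mul_apply]
  have : ∀ r : (s : Fin n) → Fin 2 × ι s, (isoV (ι := ι) m)ᵀ i r * isoV (ι := ι) m r j =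
      ((2 : ℂ) ^ n)⁻¹ * ∏ s, ((wv (s ∈ m) (r s).1) * (if (r s).2 = i s then 1 else 0)) *
      (wv (s ∈ m) (r s).1 * (if (r s).2 = j s then 1 else 0)) := by
    intro r
    rw [← scale_sq, Finset.prod_mul_distrib, Matrix.transpose_apply]
    unfold isoV
    ring
  simp only [this]
  rw [← Finset.mul_sum, h2]; simp

lemma isoV_conj_apply {n : ℕ} {ι : Fin n → Type*} [∀ s, Fintype (ι s)] [∀ s, DecidableEq (ι s)]
    (m : Finset (Fin n)) (σ : Matrix ((s : Fin n) → ι s) ((s : Fin n) → ι s) ℂ)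
    (r c : (s : Fin n) → Fin 2 × ι s) :
    (isoV (ι := ι) m * σ * (isoV (ι := ι) m)ᴴ) r c = ((2 : ℂ) ^ n)⁻¹ *
      ((∏ s, wv (s ∈ m) (r s).1 * star (wv (s ∈ m) (c s).1)) *
        σ (fun s => (r s).2) (fun s => (c s).2)) := by
  rw [Matrix.mul_apply]
  simp only [Matrix.mul_apply, Matrix.conjTranspose_apply, isoV_apply, apply_ite star, star_zero,
    mul_ite, mul_zero, ite_mul, zero_mul, Finset.sum_ite_eq, Finset.mem_univ, if_true]
  rw [← scale_sq, Finset.prod_mul_distrib]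
  simp only [star_mul', star_prod, Complex.star_def, Complex.conj_ofReal, map_prod]
  ring

lemma oneMinusIY_wv (b : Prop) [Decidable b] (x y : Fin 2) :
    oneMinusIY (if b then y else x) (if b then x else y) = wv b x * star (wv b y) := by
  by_cases h : b <;> fin_cases x <;> fin_cases y <;> simp [oneMinusIY, wv, h]

lemma ptm_stateEmbed {n : ℕ} {ι : Fin n → Type*} [∀ s, Fintype (ι s)] [∀ s, DecidableEq (ι s)]
    (m : Finset (Fin n)) (ρ : Matrix ((s : Fin n) → ι s) ((s : Fin n) → ι s) ℂ)
    (r c : (s : Fin n) → Fin 2 × ι s) :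
    ptm m (stateEmbed ρ) r c =
      (((isoV (ι := ι) m * ptm m ρ * (isoV (ι := ι) m)ᴴ) r c).re : ℂ) := by
  rw [isoV_conj_apply]
  have h1 : ((2 : ℂ) ^ n)⁻¹ = ((((2 : ℝ) ^ n)⁻¹ : ℝ) : ℂ) := by push_cast; rfl
  rw [h1, Complex.re_ofReal_mul]
  unfold ptm stateEmbed
  congr 4
  · refine Finset.prod_congr rfl fun s _ => ?_
    rw [← oneMinusIY_wv]
    congr 1 <;> by_cases hs : s ∈ m <;> simp [hs]
  · congr 1 <;> ext s <;> by_cases hs : s ∈ m <;> simp [hs]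

lemma ptm_empty {n : ℕ} {ι : Fin n → Type*}
    (ρ : Matrix ((s : Fin n) → ι s) ((s : Fin n) → ι s) ℂ) : ptm ∅ ρ = ρ := by
  ext i j; simp [ptm]

lemma ptm_herm {n : ℕ} {ι : Fin n → Type*} (m : Finset (Fin n))
    {ρ : Matrix ((s : Fin n) → ι s) ((s : Fin n) → ι s) ℂ} (h : ρ.IsHermitian) :
    (ptm m ρ).IsHermitian := by
  ext i j
  simp only [ptm, Matrix.conjTranspose_apply]
  rw [h.apply]

/-- The real-part matrix in terms of the conjugate. -/
lemma re_eq {κ : Type*} (B : Matrix κ κ ℂ) (r c : κ) :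
    ((B r c).re : ℂ) = (1 / 2 : ℂ) * (B r c + star (B r c)) := by
  rw [Complex.star_def, Complex.add_conj]; push_cast; ring

lemma roots_prod_lin {γ : Type*} [Fintype γ] (f : γ → ℂ) :
    (∏ i, (Polynomial.X - Polynomial.C (f i))).roots = Finset.univ.val.map f := by
  rw [Polynomial.roots_prod]
  · simp
  · simp [Finset.prod_ne_zero_iff, Polynomial.X_sub_C_ne_zero]

lemma negEig_eq_of_isometry {κ τ : Type*} [Fintype κ] [DecidableEq κ] [Fintype τ] [DecidableEq τ]
    (A : Matrix κ κ ℂ) (W : Matrix κ τ ℂ) (d : τ → ℝ) (hW : Wᴴ * W = 1)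
    (hA : A = W * Matrix.diagonal (fun t => (d t : ℂ)) * Wᴴ) :
    negEig A = ∑ t, max 0 (-(d t)) := by
  have hH : A.IsHermitian := by
    rw [hA]
    apply Matrix.isHermitian_mul_mul_conjTranspose
    ext i j
    rw [Matrix.conjTranspose_apply, Matrix.diagonal_apply, Matrix.diagonal_apply]
    by_cases h : i = j
    · subst h; simp
    · simp [h, Ne.symm h]
  unfold negEig
  rw [dif_pos hH]
  have hc := Matrix.charpoly_mul_comm' W (Matrix.diagonal (fun t => (d t : ℂ)) * Wᴴ)
  rw [← Matrix.mul_assoc, ← hA, Matrix.mul_assoc, hW, Matrix.mul_one, hH.charpoly_eq,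
    Matrix.charpoly_diagonal] at hc
  have hr := congrArg Polynomial.roots hc
  rw [Polynomial.roots_mul, Polynomial.roots_mul] at hr
  rotate_left
  · exact mul_ne_zero (by simp) (Finset.prod_ne_zero_iff.mpr fun i _ => Polynomial.X_sub_C_ne_zero _)
  · exact mul_ne_zero (by simp) (Finset.prod_ne_zero_iff.mpr fun i _ => Polynomial.X_sub_C_ne_zero _)
  rw [roots_prod_lin, roots_prod_lin, Polynomial.roots_X_pow, Polynomial.roots_X_pow] at hr
  have hs := congrArg (fun S : Multiset ℂ => (S.map (fun z => max 0 (-z.re))).sum) hr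
  simpa [Multiset.map_nsmul, Multiset.sum_nsmul] using hs

lemma obsEmbed_00 {ι : Type*} (A : Matrix ι ι ℂ) (i j : ι) :
    obsEmbed A (0, i) (0, j) = ((A i j).re : ℂ) := by simp [obsEmbed, Ymat]
lemma obsEmbed_01 {ι : Type*} (A : Matrix ι ι ℂ) (i j : ι) :
    obsEmbed A (0, i) (1, j) = ((A i j).im : ℂ) := by simp [obsEmbed, Ymat]
lemma obsEmbed_10 {ι : Type*} (A : Matrix ι ι ℂ) (i j : ι) :
    obsEmbed A (1, i) (0, j) = -((A i j).im : ℂ) := by simp [obsEmbed, Ymat]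
lemma obsEmbed_11 {ι : Type*} (A : Matrix ι ι ℂ) (i j : ι) :
    obsEmbed A (1, i) (1, j) = ((A i j).re : ℂ) := by simp [obsEmbed, Ymat]

lemma obsEmbed_mul {ι : Type*} [Fintype ι] (A B : Matrix ι ι ℂ) :
    obsEmbed A * obsEmbed B = obsEmbed (A * B) := by
  ext ⟨a, i⟩ ⟨b, j⟩
  rw [Matrix.mul_apply, Fintype.sum_prod_type]
  fin_cases a <;> fin_cases b <;>
    simp [obsEmbed_00, obsEmbed_01, obsEmbed_10, obsEmbed_11, Fin.sum_univ_two, Matrix.mul_apply, ← Finset.sum_add_distrib,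
      ← Finset.sum_neg_distrib, ← Finset.sum_sub_distrib] <;>
    refine Finset.sum_congr rfl fun k _ => ?_ <;> ring

lemma obsEmbed_real {ι : Type*} (A : Matrix ι ι ℂ) (p q) : (obsEmbed A p q).im = 0 := by
  obtain ⟨a, i⟩ := p
  obtain ⟨b, j⟩ := q
  fin_cases a <;> fin_cases b <;> simp [obsEmbed, Ymat]

lemma obsEmbed_herm {ι : Type*} {A : Matrix ι ι ℂ} (h : A.IsHermitian) :
    (obsEmbed A).IsHermitian := by
  ext ⟨a, i⟩ ⟨b, j⟩
  rw [Matrix.conjTranspose_apply]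
  have h' := h.apply i j
  rw [Complex.ext_iff] at h'
  simp at h'
  fin_cases a <;> fin_cases b <;> simp [obsEmbed_00, obsEmbed_01, obsEmbed_10, obsEmbed_11, ← h'.1, ← h'.2]

lemma transpose_of_real {ι : Type*} {A : Matrix ι ι ℂ} (h : A.IsHermitian)
    (hr : ∀ p q, (A p q).im = 0) : Aᵀ = A := by
  ext i j
  rw [Matrix.transpose_apply, ← h.apply, Complex.star_def, Complex.conj_eq_iff_im.mpr (hr _ _)]

lemma obsEmbed_sum {ι O : Type*} [Fintype O] [DecidableEq ι] (A : O → Matrix ι ι ℂ)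
    (h : ∑ a, A a = 1) : ∑ a, obsEmbed (A a) = 1 := by
  have h1 : obsEmbed (1 : Matrix ι ι ℂ) = 1 := by
    ext ⟨a, i⟩ ⟨b, j⟩
    by_cases hij : i = j <;> fin_cases a <;> fin_cases b <;>
      simp [obsEmbed_00, obsEmbed_01, obsEmbed_10, obsEmbed_11, Matrix.one_apply, hij]
  rw [← h1, ← h]
  ext ⟨a, i⟩ ⟨b, j⟩
  simp [obsEmbed, Matrix.sum_apply, Finset.sum_add_distrib, Finset.mul_sum]

lemma obsEmbed_wv {ι : Type*} [Fintype ι] [DecidableEq ι] (A : Matrix ι ι ℂ) (p : Fin 2 × ι)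
    (b : Prop) [Decidable b] (hb : ¬ b) (j : ι) :
    ∑ x : Fin 2 × ι, obsEmbed A p x * (wv b x.1 * (if x.2 = j then 1 else 0)) =
      wv b p.1 * A p.2 j := by
  obtain ⟨a, i⟩ := p
  rw [Fintype.sum_prod_type]
  have := Complex.re_add_im (A i j)
  fin_cases a <;> simp [obsEmbed_00, obsEmbed_01, obsEmbed_10, obsEmbed_11, wv, hb, Fin.sum_univ_two]
  linear_combination Complex.I * this - (A i j).im * Complex.I_sq

lemma npTensor_isoV {n : ℕ} {ι : Fin n → Type*} [∀ s, Fintype (ι s)] [∀ s, DecidableEq (ι s)]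
    (A : (s : Fin n) → Matrix (ι s) (ι s) ℂ) :
    npTensor (fun s => obsEmbed (A s)) * isoV (ι := ι) ∅ = isoV (ι := ι) ∅ * npTensor A := by
  ext r j
  have h2 := Finset.prod_congr (rfl : (Finset.univ : Finset (Fin n)) = Finset.univ)
    (fun s _ => obsEmbed_wv (A s) (r s) (s ∈ (∅ : Finset (Fin n))) (by simp) (j s))
  rw [Fintype.prod_sum] at h2
  rw [Matrix.mul_apply, Matrix.mul_apply]
  simp only [isoV_apply ∅ r, ite_mul, zero_mul, Finset.sum_ite_eq, Finset.mem_univ, if_true]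
  unfold npTensor
  rw [mul_assoc, ← Finset.prod_mul_distrib, ← h2, Finset.mul_sum]
  refine Finset.sum_congr rfl fun x _ => ?_
  rw [Finset.prod_mul_distrib]
  unfold isoV
  ring

lemma stateEmbed_trace {n : ℕ} {ι : Fin n → Type*} [∀ s, Fintype (ι s)] [∀ s, DecidableEq (ι s)]
    (ρ : Matrix ((s : Fin n) → ι s) ((s : Fin n) → ι s) ℂ)
    (N : Matrix ((s : Fin n) → Fin 2 × ι s) ((s : Fin n) → Fin 2 × ι s) ℂ)
    (K : Matrix ((s : Fin n) → ι s) ((s : Fin n) → ι s) ℂ)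
    (hN : ∀ p q, (N p q).im = 0) (h : N * isoV (ι := ι) ∅ = isoV (ι := ι) ∅ * K) :
    Matrix.trace (stateEmbed ρ * N) = ((Matrix.trace (ρ * K)).re : ℂ) := by
  have h1 : Matrix.trace (ρ * K) = Matrix.trace (isoV (ι := ι) ∅ * ρ * (isoV (ι := ι) ∅)ᴴ * N) := by
    rw [Matrix.mul_assoc, Matrix.mul_assoc, Matrix.trace_mul_comm (isoV ∅), Matrix.mul_assoc,
      Matrix.mul_assoc, h, ← Matrix.mul_assoc _ _ K, isoV_iso, Matrix.one_mul]
  have h3 : ∀ x y, stateEmbed ρ x y = (((isoV (ι := ι) ∅ * ρ * (isoV (ι := ι) ∅)ᴴ) x y).re : ℂ) := by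
    intro x y
    rw [← ptm_empty (stateEmbed ρ), ptm_stateEmbed, ptm_empty]
  rw [h1]
  simp only [Matrix.trace, Matrix.diag, Matrix.mul_apply (N := N), h3,
    Complex.re_sum, Complex.ofReal_sum]
  refine Finset.sum_congr rfl fun x _ => Finset.sum_congr rfl fun y _ => ?_
  have : N y x = ((N y x).re : ℂ) := by
    apply Complex.ext <;> simp [hN]
  rw [this, Complex.re_mul_ofReal]
  push_cast; rfl

lemma stateEmbed_pos {n : ℕ} {ι : Fin n → Type*} [∀ s, Fintype (ι s)] [∀ s, DecidableEq (ι s)]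
    {ρ : Matrix ((s : Fin n) → ι s) ((s : Fin n) → ι s) ℂ} (h : ρ.PosSemidef) :
    (stateEmbed ρ).PosSemidef := by
  have h1 : (isoV (ι := ι) ∅ * ρ * (isoV (ι := ι) ∅)ᴴ).PosSemidef := h.mul_mul_conjTranspose_same _
  have h2 := h1.transpose
  have : stateEmbed ρ = (1 / 2 : ℂ) • (isoV (ι := ι) ∅ * ρ * (isoV (ι := ι) ∅)ᴴ + (isoV (ι := ι) ∅ * ρ * (isoV (ι := ι) ∅)ᴴ)ᵀ) := by
    ext r c
    rw [← ptm_empty (stateEmbed ρ), ptm_stateEmbed, ptm_empty, re_eq, Matrix.smul_apply,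
      Matrix.add_apply, Matrix.transpose_apply, h1.1.apply, smul_eq_mul]
  rw [this]
  exact (h1.add h2).smul (by positivity)

lemma negEig_ptm_stateEmbed {n : ℕ} {ι : Fin n → Type*} [∀ s, Fintype (ι s)]
    [∀ s, DecidableEq (ι s)] (m : Finset (Fin n))
    {ρ : Matrix ((s : Fin n) → ι s) ((s : Fin n) → ι s) ℂ} (h : ρ.PosSemidef) :
    negEig (ptm m (stateEmbed ρ)) = negEig (ptm m ρ) := by
  rcases Nat.eq_zero_or_pos n with rfl | hn
  · have hm : m = ∅ := Subsingleton.elim _ _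
    subst hm
    rw [ptm_empty, ptm_empty]
    have z : ∀ (κ : Type _) [Fintype κ] [DecidableEq κ] (A : Matrix κ κ ℂ), A.PosSemidef →
        negEig A = 0 := by
      intro κ _ _ A hA
      unfold negEig
      rw [dif_pos hA.1]
      exact Finset.sum_eq_zero fun i _ => by simpa using hA.eigenvalues_nonneg i
    rw [z _ _ (stateEmbed_pos h), z _ _ h]
  · have hH := ptm_herm m h.1
    set U : Matrix ((s : Fin n) → ι s) ((s : Fin n) → ι s) ℂ :=
      hH.eigenvectorUnitary.1 with hU
    have hUU : Uᴴ * U = 1 := by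
      have := Unitary.coe_star_mul_self hH.eigenvectorUnitary
      simpa [hU, Matrix.star_eq_conjTranspose] using this
    have hsp : ptm m ρ = U * Matrix.diagonal (fun t => (hH.eigenvalues t : ℂ)) * Uᴴ := by
      have := hH.spectral_theorem
      rw [Unitary.conjStarAlgAut_apply] at this
      exact this
    have hneg : negEig (ptm m ρ) = ∑ t, max 0 (-(hH.eigenvalues t)) :=
      negEig_eq_of_isometry _ U _ hUU hsp
    set Z := isoV (ι := ι) m * U with hZ
    have hZZ : Zᴴ * Z = 1 := by
      rw [hZ, Matrix.conjTranspose_mul, Matrix.mul_assoc, ← Matrix.mul_assoc _ _ U, isoV_iso,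
        Matrix.one_mul, hUU]
    have hZT : Zᵀ * Z = 0 := by
      rw [hZ, Matrix.transpose_mul, Matrix.mul_assoc, ← Matrix.mul_assoc _ _ U, isoV_orth hn,
        Matrix.zero_mul, Matrix.mul_zero]
    have hZ1 : (Z.map star)ᴴ * (Z.map star) = 1 := by
      have e : (Z.map star)ᴴ * (Z.map star) = (Zᴴ * Z)ᵀ := by
        ext i j
        simp [Matrix.mul_apply, mul_comm]
      rw [e, hZZ, Matrix.transpose_one]
    have hZ2 : (Z.map star)ᴴ * Z = 0 := by
      rw [← hZT]; ext i j; simp [Matrix.mul_apply]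
    have hZ3 : Zᴴ * (Z.map star) = 0 := by
      have := congrArg Matrix.conjTranspose hZ2
      simpa using this
    rw [negEig_eq_of_isometry (ptm m (stateEmbed ρ)) (Matrix.fromCols Z (Z.map star))
      (Sum.elim (fun t => hH.eigenvalues t / 2) (fun t => hH.eigenvalues t / 2)), hneg]
    · rw [Fintype.sum_sum_type, ← Finset.sum_add_distrib]
      refine Finset.sum_congr rfl fun t _ => ?_
      simp only [Sum.elim_inl, Sum.elim_inr]
      rcases le_total 0 (hH.eigenvalues t) with h0 | h0
      · rw [max_eq_left (by linarith), max_eq_left (by linarith)]; ring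
      · rw [max_eq_right (by linarith), max_eq_right (by linarith)]; ring
    · rw [Matrix.conjTranspose_fromCols_eq_fromRows_conjTranspose, Matrix.fromRows_mul_fromCols,
        hZZ, hZ1, hZ2, hZ3, Matrix.fromBlocks_one]
    · have hB : isoV (ι := ι) m * ptm m ρ * (isoV (ι := ι) m)ᴴ =
          Z * Matrix.diagonal (fun t => (hH.eigenvalues t : ℂ)) * Zᴴ := by
        conv_lhs => rw [hsp]
        simp only [hZ, Matrix.conjTranspose_mul, Matrix.mul_assoc]
      ext r c
      rw [ptm_stateEmbed, re_eq, hB]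
      simp only [Matrix.mul_apply (M := _ * _), Matrix.mul_diagonal, Fintype.sum_sum_type,
        Matrix.conjTranspose_apply, Matrix.fromCols_apply_inl, Matrix.fromCols_apply_inr,
        Matrix.map_apply, Sum.elim_inl, Sum.elim_inr, star_sum, mul_add, Finset.mul_sum]
      congr 1 <;> refine Finset.sum_congr rfl fun t _ => ?_
      · push_cast; ring
      · simp; ring

/-- Proposition 1: any n-partite probability distribution with a quantum
representation also has a real quantum representation on the doubled spaces, with real
symmetric state and projections, reproducing the same distribution and having the same
negativity across every bipartition. -/
theorem real_quantum_representation
    {n : ℕ} {ι X O : Fin n → Type*}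
    [∀ s, Fintype (ι s)] [∀ s, Nonempty (ι s)] [∀ s, DecidableEq (ι s)]
    [∀ s, Fintype (O s)]
    (ρ : Matrix ((s : Fin n) → ι s) ((s : Fin n) → ι s) ℂ)
    (hρ : ρ.PosSemidef) (htr : Matrix.trace ρ = 1)
    (M : (s : Fin n) → X s → O s → Matrix (ι s) (ι s) ℂ)
    (hMh : ∀ s x a, (M s x a).IsHermitian)
    (hMi : ∀ s x a, M s x a * M s x a = M s x a)
    (hMs : ∀ s x, ∑ a, M s x a = 1)
    (P : ((s : Fin n) → O s) → ((s : Fin n) → X s) → ℝ)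
    (hP : ∀ a x, (P a x : ℂ) = Matrix.trace (ρ * npTensor (fun s => M s (x s) (a s)))) :
    ∃ (ρ' : Matrix ((s : Fin n) → Fin 2 × ι s) ((s : Fin n) → Fin 2 × ι s) ℂ)
      (M' : (s : Fin n) → X s → O s → Matrix (Fin 2 × ι s) (Fin 2 × ι s) ℂ),
      ρ'.PosSemidef ∧ Matrix.trace ρ' = 1 ∧
      (∀ p q, (ρ' p q).im = 0) ∧ ρ'ᵀ = ρ' ∧
      (∀ s x a, (M' s x a).IsHermitian ∧ M' s x a * M' s x a = M' s x a ∧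
        (∀ p q, ((M' s x a) p q).im = 0) ∧ (M' s x a)ᵀ = M' s x a) ∧
      (∀ s x, ∑ a, M' s x a = 1) ∧
      (∀ a x, (P a x : ℂ) = Matrix.trace (ρ' * npTensor (fun s => M' s (x s) (a s)))) ∧
      (∀ m : Finset (Fin n), negEig (ptm m ρ') = negEig (ptm m ρ)) := by
  refine ⟨stateEmbed ρ, fun s x a => obsEmbed (M s x a), stateEmbed_pos hρ, ?_, ?_, ?_, ?_, ?_, ?_,
    fun m => negEig_ptm_stateEmbed m hρ⟩
  · have := stateEmbed_trace ρ 1 1 (by intro p q; rw [Matrix.one_apply]; split_ifs <;> simp)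
      (by rw [Matrix.one_mul, Matrix.mul_one])
    rw [Matrix.mul_one, Matrix.mul_one, htr] at this
    simpa using this
  · intro p q; exact Complex.ofReal_im _
  · exact transpose_of_real (stateEmbed_pos hρ).1 (fun p q => Complex.ofReal_im _)
  · intro s x a
    exact ⟨obsEmbed_herm (hMh s x a), by rw [obsEmbed_mul, hMi], obsEmbed_real _,
      transpose_of_real (obsEmbed_herm (hMh s x a)) (obsEmbed_real _)⟩
  · intro s x
    exact obsEmbed_sum _ (hMs s x)
  · intro a x
    rw [stateEmbed_trace ρ _ (npTensor fun s => M s (x s) (a s)) _ (npTensor_isoV _), ← hP,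
      Complex.ofReal_re]
    intro p q
    have : ∀ s, obsEmbed (M s (x s) (a s)) (p s) (q s) =
        ((obsEmbed (M s (x s) (a s)) (p s) (q s)).re : ℂ) := by
      intro s
      apply Complex.ext <;> simp [obsEmbed_real]
    unfold npTensor
    rw [Finset.prod_congr rfl fun s _ => this s, ← Complex.ofReal_prod, Complex.ofReal_im]
end

section
/- PPT states satisfy the CHSH inequality (the PPT Tsirelson bound of CHSH is 2): let ρ be a bipartite quantum state on ι_A × ι_B with ρ^{T_A} positive semidefinite, and let A₁, A₂ be dichotomic observables on ι_A and B₁, B₂ dichotomic observables on ι_B. Then the CHSH value satisfies v ≤ 2. -/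
open Matrix
open scoped Kronecker ComplexOrder

theorem chsh_sq {ιA ιB : Type*} [Fintype ιA] [Fintype ιB] [DecidableEq ιA] [DecidableEq ιB]
    (A₁ A₂ : Matrix ιA ιA ℂ) (B₁ B₂ : Matrix ιB ιB ℂ)
    (hA₁d : A₁ * A₁ = 1) (hA₂d : A₂ * A₂ = 1) (hB₁d : B₁ * B₁ = 1) (hB₂d : B₂ * B₂ = 1) :
    (A₁ ⊗ₖ B₁ + A₁ ⊗ₖ B₂ + A₂ ⊗ₖ B₁ - A₂ ⊗ₖ B₂) * (A₁ ⊗ₖ B₁ + A₁ ⊗ₖ B₂ + A₂ ⊗ₖ B₁ - A₂ ⊗ₖ B₂)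
      = 1 + 1 + 1 + 1 - (A₁ * A₂ - A₂ * A₁) ⊗ₖ (B₁ * B₂ - B₂ * B₁) := by
  have hs : ∀ (X Y : Matrix ιA ιA ℂ) (Z : Matrix ιB ιB ℂ), (X - Y) ⊗ₖ Z = X ⊗ₖ Z - Y ⊗ₖ Z := by
    intros; ext; simp [sub_mul]
  have hs' : ∀ (Z : Matrix ιA ιA ℂ) (X Y : Matrix ιB ιB ℂ), Z ⊗ₖ (X - Y) = Z ⊗ₖ X - Z ⊗ₖ Y := by
    intros; ext; simp [mul_sub]
  simp only [add_mul, mul_add, sub_mul, mul_sub, ← mul_kronecker_mul, hA₁d, hA₂d, hB₁d, hB₂d,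
    one_kronecker_one, hs, hs']
  abel

theorem chsh_bound {ιA ιB : Type*} [Fintype ιA] [Fintype ιB] [DecidableEq ιA] [DecidableEq ιB]
    (ρ : Matrix (ιA × ιB) (ιA × ιB) ℂ) (hρ : ρ.PosSemidef) (htr : Matrix.trace ρ = 1)
    (A₁ A₂ : Matrix ιA ιA ℂ) (B₁ B₂ : Matrix ιB ιB ℂ)
    (hA₁ : A₁.IsHermitian) (hA₂ : A₂.IsHermitian)
    (hB₁ : B₁.IsHermitian) (hB₂ : B₂.IsHermitian)
    (hA₁d : A₁ * A₁ = 1) (hA₂d : A₂ * A₂ = 1) (hB₁d : B₁ * B₁ = 1) (hB₂d : B₂ * B₂ = 1) :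
    4 * (Matrix.trace (ρ * (A₁ ⊗ₖ B₁ + A₁ ⊗ₖ B₂ + A₂ ⊗ₖ B₁ - A₂ ⊗ₖ B₂))).re ≤
      8 - (Matrix.trace (ρ * ((A₁ * A₂ - A₂ * A₁) ⊗ₖ (B₁ * B₂ - B₂ * B₁)))).re := by
  have hsq := chsh_sq A₁ A₂ B₁ B₂ hA₁d hA₂d hB₁d hB₂d
  have hC : (A₁ ⊗ₖ B₁ + A₁ ⊗ₖ B₂ + A₂ ⊗ₖ B₁ - A₂ ⊗ₖ B₂)ᴴ
      = A₁ ⊗ₖ B₁ + A₁ ⊗ₖ B₂ + A₂ ⊗ₖ B₁ - A₂ ⊗ₖ B₂ := by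
    simp only [conjTranspose_add, conjTranspose_sub, conjTranspose_kronecker, hA₁.eq, hA₂.eq,
      hB₁.eq, hB₂.eq]
  generalize A₁ ⊗ₖ B₁ + A₁ ⊗ₖ B₂ + A₂ ⊗ₖ B₁ - A₂ ⊗ₖ B₂ = C at *
  generalize (A₁ * A₂ - A₂ * A₁) ⊗ₖ (B₁ * B₂ - B₂ * B₁) = K at *
  have h := (hρ.conjTranspose_mul_mul_same (C - (1 + 1))).trace_nonneg
  have e : ((C - (1 + 1))ᴴ * ρ * (C - (1 + 1))).trace = 8 - (ρ * K).trace - 4 * (ρ * C).trace := by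
    rw [mul_assoc, trace_mul_comm, mul_assoc, conjTranspose_sub, hC, conjTranspose_add,
      conjTranspose_one]
    have : (C - (1 + 1)) * (C - (1 + 1))
        = 1 + 1 + 1 + 1 + 1 + 1 + 1 + 1 - K - C - C - C - C := by
      rw [sub_mul, mul_sub, hsq]
      simp only [add_mul, mul_add, mul_sub, one_mul, mul_one]
      abel
    rw [this]
    simp only [mul_add, mul_sub, mul_one, trace_add, trace_sub, htr]
    ring
  rw [e] at h
  have h2 := (Complex.le_def.1 h).1
  simp at h2
  linarith

theorem trace_ptA {ιA ιB : Type*} [Fintype ιA] [Fintype ιB]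
    (ρ : Matrix (ιA × ιB) (ιA × ιB) ℂ) (M : Matrix ιA ιA ℂ) (N : Matrix ιB ιB ℂ) :
    (ptA ρ * (Mᵀ ⊗ₖ N)).trace = (ρ * (M ⊗ₖ N)).trace := by
  simp only [trace, diag, mul_apply, ptA, kroneckerMap_apply, transpose_apply,
    Fintype.sum_prod_type]
  rw [show (∑ x : ιA, ∑ y : ιB, ∑ z : ιA, ∑ w : ιB, ρ (x, y) (z, w) * (M z x * N w y))
    = ∑ x : ιA, ∑ z : ιA, ∑ y : ιB, ∑ w : ιB, ρ (x, y) (z, w) * (M z x * N w y) from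
    Finset.sum_congr rfl fun _ _ => Finset.sum_comm]
  rw [Finset.sum_comm]
  conv_rhs => rw [Finset.sum_comm]
  conv_lhs => rw [Finset.sum_comm]
  exact Finset.sum_congr rfl fun _ _ => Finset.sum_comm

/-- PPT states satisfy the CHSH inequality; the PPT Tsirelson bound of
CHSH is 2. -/
theorem ppt_states_satisfy_chsh
    {ιA ιB : Type*} [Fintype ιA] [Fintype ιB] [Nonempty ιA] [Nonempty ιB]
    [DecidableEq ιA] [DecidableEq ιB]
    (ρ : Matrix (ιA × ιB) (ιA × ιB) ℂ) (hρ : ρ.PosSemidef) (htr : Matrix.trace ρ = 1)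
    (hppt : (ptA ρ).PosSemidef)
    (A₁ A₂ : Matrix ιA ιA ℂ) (B₁ B₂ : Matrix ιB ιB ℂ)
    (hA₁ : A₁.IsHermitian) (hA₂ : A₂.IsHermitian)
    (hB₁ : B₁.IsHermitian) (hB₂ : B₂.IsHermitian)
    (hA₁d : A₁ * A₁ = 1) (hA₂d : A₂ * A₂ = 1) (hB₁d : B₁ * B₁ = 1) (hB₂d : B₂ * B₂ = 1) :
    (Matrix.trace (ρ * (A₁ ⊗ₖ B₁ + A₁ ⊗ₖ B₂ + A₂ ⊗ₖ B₁ - A₂ ⊗ₖ B₂))).re ≤ 2 := by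
  have h1 := chsh_bound ρ hρ htr A₁ A₂ B₁ B₂ hA₁ hA₂ hB₁ hB₂ hA₁d hA₂d hB₁d hB₂d
  have ht : (ptA ρ).trace = 1 := by rw [← htr]; rfl
  have h2 := chsh_bound (ptA ρ) hppt ht A₁ᵀ A₂ᵀ B₁ B₂ hA₁.transpose hA₂.transpose hB₁ hB₂
    (by rw [← transpose_mul, hA₁d, transpose_one]) (by rw [← transpose_mul, hA₂d, transpose_one])
    hB₁d hB₂d
  have hK : A₁ᵀ * A₂ᵀ - A₂ᵀ * A₁ᵀ = (-(A₁ * A₂ - A₂ * A₁))ᵀ := by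
    simp [transpose_mul]
  have hn : (-(A₁ * A₂ - A₂ * A₁)) ⊗ₖ (B₁ * B₂ - B₂ * B₁)
      = -((A₁ * A₂ - A₂ * A₁) ⊗ₖ (B₁ * B₂ - B₂ * B₁)) := by
    ext; simp only [kroneckerMap_apply, Matrix.neg_apply, neg_mul]
  have hv : (ptA ρ * (A₁ᵀ ⊗ₖ B₁ + A₁ᵀ ⊗ₖ B₂ + A₂ᵀ ⊗ₖ B₁ - A₂ᵀ ⊗ₖ B₂)).trace
      = (ρ * (A₁ ⊗ₖ B₁ + A₁ ⊗ₖ B₂ + A₂ ⊗ₖ B₁ - A₂ ⊗ₖ B₂)).trace := by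
    simp only [mul_add, mul_sub, trace_add, trace_sub, trace_ptA]
  rw [hK, hv, trace_ptA, hn, mul_neg, trace_neg, Complex.neg_re] at h2
  linarith
end
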